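/- Let 𝕏 be a σ-finite measure space and ℳ a Banach L^0(𝕏)-module. A family {v_i}_{i∈I} ⊆ ℳ is summable if and only if ⋀_{F ∈ 𝒫_f(I)} ⋁_{G ∈ 𝒫_f(I∖F)} |Σ_{i∈G} v_i| = 0. In this case the set J := {i ∈ I : v_i ≠ 0} is at most countable and, for every increasing sequence (F_n)_{n∈ℕ} of finite subsets of J with ⋃_n F_n = J, the partial sums Σ_{i∈F_n} v_i converge to Σ_{i∈I} v_i in ℳ as n → ∞. -/

import Mathlib

/-!
Everything reduces to sequences. In `L⁰(𝕏)` every family has a countable subfamily with the same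
upper bounds (`exists_seq_upperBounds`, an exhaustion argument for the integral of the arctangent
against a finite equivalent measure). This gives Dedekind completeness (`exists_isLUB_L0`) and
shows that a decreasing net `b F` over finite sets `F` with infimum `0` has a decreasing sequence
`b (H n)` with infimum `0`, which converges to `0` in `L⁰(𝕏)` by dominated convergence
(`exists_seq_of_antitone`).

If the family has sum `s`, then `|∑_{i ∈ G} v_i| ≤ 2 ⋁_G |s - ∑_{i ∈ F ∪ G} v_i|` for `G` disjoint
from `F`, which is the Cauchy condition. Conversely, under the Cauchy condition with suprema `b F`,
the partial sums over `H n` form a Cauchy sequence; its limit `s` satisfies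
`|s - ∑_{i ∈ H n} v_i| ≤ b (H n)`, whence `|s - ∑_{i ∈ H n ∪ G} v_i| ≤ 2 b (H n)`. The support of
`v` is contained in `⋃ₙ H n`, since `|v_i| ≤ b (H n)` for `i ∉ H n`. Finally, an exhausting sequence
`F m` of the support eventually contains the support of `v` on `H n`, so that its partial sums
are eventually within `b (H n)` of `s`.
-/

open MeasureTheory Filter Set TensorProduct

noncomputable section

namespace Paper

variable {X : Type*} [MeasurableSpace X]

/-- The space `L⁰(𝕏)` of real-valued measurable functions up to `μ`-a.e. equality. -/
abbrev L0 (μ : Measure X) : Type _ := X →ₘ[μ] ℝ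

instance (μ : Measure X) : CommRing (L0 μ) :=
  { (inferInstance : AddCommGroup (L0 μ)), (inferInstance : CommMonoid (L0 μ)) with
    left_distrib := fun a b c => AEEqFun.toGerm_injective <| by
      simp only [AEEqFun.mul_toGerm, AEEqFun.add_toGerm, mul_add]
    right_distrib := fun a b c => AEEqFun.toGerm_injective <| by
      simp only [AEEqFun.mul_toGerm, AEEqFun.add_toGerm, add_mul]
    zero_mul := fun a => AEEqFun.toGerm_injective <| by
      simp only [AEEqFun.mul_toGerm, AEEqFun.zero_toGerm, zero_mul]
    mul_zero := fun a => AEEqFun.toGerm_injective <| by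
      simp only [AEEqFun.mul_toGerm, AEEqFun.zero_toGerm, mul_zero] }

/-- The distance on `L⁰(𝕏)` inducing the topology of convergence in measure, defined through
the auxiliary finite measure `μ.toFinite` (which satisfies `μ ≪ μ.toFinite ≪ μ`). -/
noncomputable def dL0 (μ : Measure X) [SFinite μ] (f g : L0 μ) : ℝ :=
  ∫ x, min |f x - g x| 1 ∂(μ.toFinite)

/-- A Banach `L⁰(𝕏)`-module: a module over `L⁰(𝕏)` endowed with a pointwise norm, complete
with respect to the induced distance. -/
class BanachMod (μ : Measure X) [SFinite μ] (M : Type*) [AddCommGroup M]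
    [Module (L0 μ) M] where
  pn : M → L0 μ
  pn_nonneg : ∀ v : M, 0 ≤ pn v
  pn_eq_zero : ∀ v : M, pn v = 0 ↔ v = 0
  pn_add_le : ∀ v w : M, pn (v + w) ≤ pn v + pn w
  pn_smul : ∀ (f : L0 μ) (v : M), pn (f • v) = |f| * pn v
  complete : ∀ u : ℕ → M,
    (∀ ε : ℝ, 0 < ε → ∃ N : ℕ, ∀ m ≥ N, ∀ n ≥ N, dL0 μ (pn (u m - u n)) 0 < ε) →
    ∃ v : M, Tendsto (fun n => dL0 μ (pn (u n - v)) 0) atTop (nhds 0)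

/-- The pointwise norm of a Banach `L⁰(𝕏)`-module, with the measure explicit. -/
noncomputable def pn (μ : Measure X) [SFinite μ] {M : Type*} [AddCommGroup M]
    [Module (L0 μ) M] [BanachMod μ M] (v : M) : L0 μ :=
  BanachMod.pn v

/-- The distance on a Banach `L⁰(𝕏)`-module. -/
noncomputable def dM (μ : Measure X) [SFinite μ] {M : Type*} [AddCommGroup M]
    [Module (L0 μ) M] [BanachMod μ M] (v w : M) : ℝ :=
  dL0 μ (pn μ (v - w)) 0

section Defs

variable (μ : Measure X) [SFinite μ]
variable {M N : Type*} [AddCommGroup M] [Module (L0 μ) M] [BanachMod μ M]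
  [AddCommGroup N] [Module (L0 μ) N] [BanachMod μ N]

/-- The set of admissible bounds of a map between Banach `L⁰(𝕏)`-modules; the pointwise norm
`|T|` of a homomorphism is the infimum of this set. -/
def homBddSet (T : M → N) : Set (L0 μ) :=
  {g | 0 ≤ g ∧ ∀ v, pn μ (T v) ≤ g * pn μ v}

/-- A homomorphism of Banach `L⁰(𝕏)`-modules: an `L⁰(𝕏)`-linear map admitting a bound
`g ∈ L⁰(𝕏)⁺` with `|T v| ≤ g |v|` (equivalently, `L⁰(𝕏)`-linear and continuous). -/
def IsHom (T : M →ₗ[L0 μ] N) : Prop :=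
  ∃ g, g ∈ homBddSet μ (⇑T)

/-- The set of admissible bounds of an `L⁰(𝕏)`-valued map (for elements of the dual module). -/
def dualBddSet (ω : M → L0 μ) : Set (L0 μ) :=
  {g | 0 ≤ g ∧ ∀ v, |ω v| ≤ g * pn μ v}

/-- Membership in the dual module `ℳ*`: an `L⁰(𝕏)`-linear map `ω : ℳ → L⁰(𝕏)` admitting a
bound `g ∈ L⁰(𝕏)⁺` with `|ω v| ≤ g |v|`. -/
def IsDual (ω : M →ₗ[L0 μ] L0 μ) : Prop :=
  ∃ g, g ∈ dualBddSet μ (⇑ω)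

/-- Membership in the unit disc `𝔻_{ℳ*}` of the dual module: `|ω| ≤ 1`, equivalently
`|ω v| ≤ |v|` for every `v`. -/
def InDualDisc (ω : M →ₗ[L0 μ] L0 μ) : Prop :=
  ∀ v, |ω v| ≤ pn μ v

/-- The family of pointwise norms `|s - ∑_{i ∈ F ∪ G} v i|` for `G` finite disjoint from `F`,
whose `F`-indexed inf-sup being `0` defines `s = ∑_{i∈I} v i`. -/
def sumUB {I : Type*} (v : I → M) (s : M) (F : Finset I) : Set (L0 μ) :=
  {g | ∃ G : Finset I, Disjoint G F ∧ g = pn μ (s - (∑ i ∈ F, v i + ∑ i ∈ G, v i))}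

/-- `HasSumMod μ v s` means that the family `{v_i}` is summable in the Banach `L⁰(𝕏)`-module
with sum `s`, i.e. `⋀_F ⋁_G |s - ∑_{i ∈ F ∪ G} v_i| = 0` (the inner suprema being the values
of `b`, and the outer infimum being `0`). -/
def HasSumMod {I : Type*} (v : I → M) (s : M) : Prop :=
  ∃ b : Finset I → L0 μ, (∀ F, IsLUB (sumUB μ v s F) (b F)) ∧ IsGLB (Set.range b) 0

/-- A family in a Banach `L⁰(𝕏)`-module is summable if it has a sum. -/
def SummableMod {I : Type*} (v : I → M) : Prop :=
  ∃ s, HasSumMod μ v s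

/-- The partial sums `∑_{i ∈ F} |v i|` of the pointwise norms of a family; the element `|v|₁`
of `ℓ₁(I, ℳ)` is the supremum of this set. -/
def l1PartialSums {I : Type*} (v : I → M) : Set (L0 μ) :=
  {g | ∃ F : Finset I, g = ∑ i ∈ F, pn μ (v i)}

/-- Membership in `ℓ₁(I, ℳ)`: the partial sums of the pointwise norms admit a supremum
(equivalently, an upper bound) in `L⁰(𝕏)`. -/
def Meml1 {I : Type*} (v : I → M) : Prop :=
  ∃ b, IsLUB (l1PartialSums μ v) b

/-- The partial sums `∑_{i ∈ F} |v i|` for an `L⁰(𝕏)`-valued family. -/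
def l1PartialSumsF {I : Type*} (v : I → L0 μ) : Set (L0 μ) :=
  {g | ∃ F : Finset I, g = ∑ i ∈ F, |v i|}

/-- Membership in `ℓ₁(I, L⁰(𝕏))`. -/
def Meml1F {I : Type*} (v : I → L0 μ) : Prop :=
  ∃ b, IsLUB (l1PartialSumsF μ v) b

/-- The set whose infimum defines the projective pointwise norm: all values
`∑_{i=1}^n |v_i||w_i|` over representations `α = ∑_{i=1}^n v_i ⊗ w_i`. -/
def piReps (α : M ⊗[L0 μ] N) : Set (L0 μ) :=
  {g | ∃ (n : ℕ) (v : Fin n → M) (w : Fin n → N),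
    α = ∑ i, v i ⊗ₜ[L0 μ] w i ∧ g = ∑ i, pn μ (v i) * pn μ (w i)}

/-- The set whose supremum defines the injective pointwise norm: all values
`|∑_{i=1}^n ω(v_i) η(w_i)|` over representations `α = ∑_{i=1}^n v_i ⊗ w_i` and elements
`ω ∈ 𝔻_{ℳ*}`, `η ∈ 𝔻_{𝒩*}`. -/
def epsReps (α : M ⊗[L0 μ] N) : Set (L0 μ) :=
  {g | ∃ (n : ℕ) (v : Fin n → M) (w : Fin n → N)
    (ω : M →ₗ[L0 μ] L0 μ) (η : N →ₗ[L0 μ] L0 μ), InDualDisc μ ω ∧ InDualDisc μ η ∧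
    α = ∑ i, v i ⊗ₜ[L0 μ] w i ∧ g = |∑ i, ω (v i) * η (w i)|}

/-- `IsPiTensor μ M N P e` states that the Banach `L⁰(𝕏)`-module `P`, together with the
`L⁰(𝕏)`-linear map `e` defined on the algebraic tensor product, realizes the projective
tensor product `ℳ ⊗̂_π 𝒩`: the pointwise norm of `e α` is the projective pointwise norm
`|α|_π` and the image of `e` is dense. -/
structure IsPiTensor (M N P : Type*) [AddCommGroup M] [Module (L0 μ) M] [BanachMod μ M]
    [AddCommGroup N] [Module (L0 μ) N] [BanachMod μ N]
    [AddCommGroup P] [Module (L0 μ) P] [BanachMod μ P]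
    (e : M ⊗[L0 μ] N →ₗ[L0 μ] P) : Prop where
  pn_emb : ∀ α : M ⊗[L0 μ] N, IsGLB (piReps μ α) (pn μ (e α))
  dense : ∀ p : P, ∀ ε : ℝ, 0 < ε → ∃ α : M ⊗[L0 μ] N, dM μ (e α) p < ε

/-- `IsEpsTensor μ M N P e` states that the Banach `L⁰(𝕏)`-module `P`, together with the
`L⁰(𝕏)`-linear map `e` defined on the algebraic tensor product, realizes the injective
tensor product `ℳ ⊗̂_ε 𝒩`: the pointwise norm of `e α` is the injective pointwise norm
`|α|_ε` and the image of `e` is dense. -/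
structure IsEpsTensor (M N P : Type*) [AddCommGroup M] [Module (L0 μ) M] [BanachMod μ M]
    [AddCommGroup N] [Module (L0 μ) N] [BanachMod μ N]
    [AddCommGroup P] [Module (L0 μ) P] [BanachMod μ P]
    (e : M ⊗[L0 μ] N →ₗ[L0 μ] P) : Prop where
  pn_emb : ∀ α : M ⊗[L0 μ] N, IsLUB (epsReps μ α) (pn μ (e α))
  dense : ∀ p : P, ∀ ε : ℝ, 0 < ε → ∃ α : M ⊗[L0 μ] N, dM μ (e α) p < ε

end Defs

/-- The sets `{ |∑_{i ∈ G} v_i| : G finite, G ∩ F = ∅ }` appearing in the Cauchy summability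
criterion. -/
def cauchyUB (μ : Measure X) [SFinite μ] {M : Type*} [AddCommGroup M] [Module (L0 μ) M]
    [BanachMod μ M] {I : Type*} (v : I → M) (F : Finset I) : Set (L0 μ) :=
  {g | ∃ G : Finset I, Disjoint G F ∧ g = pn μ (∑ i ∈ G, v i)}

/-! ### The order structure of `L⁰(𝕏)` -/

instance isOrderedAddMonoid_L0 (μ : Measure X) : IsOrderedAddMonoid (L0 μ) where
  add_le_add_left a b hab c := by
    rw [← AEEqFun.coeFn_le] at hab ⊢
    filter_upwards [hab, AEEqFun.coeFn_add a c, AEEqFun.coeFn_add b c] with x h1 h2 h3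
    rw [h2, h3]
    simpa using h1

/-- Every family in `L⁰(𝕏)` has a countable subfamily with the same upper bounds. Among all
sequences of indices, one maximizes `∫ ⨆ₙ arctan (u (c n))` against a finite measure equivalent
to `μ`; adjoining any further index cannot increase the integral, hence does not increase the
pointwise supremum. -/
lemma exists_seq_upperBounds (μ : Measure X) [SFinite μ] {ι : Type*} [Nonempty ι]
    (u : ι → L0 μ) :
    ∃ c : ℕ → ι, ∀ g : L0 μ, (∀ n, u (c n) ≤ g) → ∀ i, u i ≤ g := by
  set θ : (ℕ → ι) → X → ℝ := fun c x => ⨆ n, Real.arctan (u (c n) x) with hθ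
  have hbdd : ∀ (c : ℕ → ι) (x : X),
      BddAbove (Set.range fun n => Real.arctan (u (c n) x)) := by
    rintro c x
    refine ⟨Real.pi / 2, ?_⟩
    rintro _ ⟨n, rfl⟩
    exact (Real.arctan_lt_pi_div_two _).le
  have hle : ∀ c n x, Real.arctan (u (c n) x) ≤ θ c x := fun c n x => le_ciSup (hbdd c x) n
  have hub : ∀ c x, θ c x ≤ Real.pi / 2 := fun c x =>
    ciSup_le fun n => (Real.arctan_lt_pi_div_two _).le
  have hlb : ∀ c x, -(Real.pi / 2) ≤ θ c x := fun c x =>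
    (Real.neg_pi_div_two_lt_arctan _).le.trans (hle c 0 x)
  have hmeas : ∀ c, Measurable (θ c) := fun c =>
    Measurable.iSup fun n => Real.measurable_arctan.comp (u (c n)).measurable
  have hint : ∀ c, Integrable (θ c) μ.toFinite := fun c =>
    Integrable.of_bound (hmeas c).aestronglyMeasurable (Real.pi / 2)
      (Eventually.of_forall fun x => abs_le.2 ⟨hlb c x, hub c x⟩)
  have hmono : ∀ c c' : ℕ → ι, (∀ n, ∃ m, c' m = c n) → ∀ x, θ c x ≤ θ c' x := by
    intro c c' h x
    refine ciSup_le fun n => ?_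
    obtain ⟨m, hm⟩ := h n
    rw [← hm]
    exact hle c' m x
  set Φ : (ℕ → ι) → ℝ := fun c => ∫ x, θ c x ∂μ.toFinite with hΦ
  have hΦbdd : BddAbove (Set.range Φ) := by
    refine ⟨∫ _, Real.pi / 2 ∂μ.toFinite, ?_⟩
    rintro _ ⟨c, rfl⟩
    exact integral_mono (hint c) (integrable_const _) (hub c)
  obtain ⟨a, -, ha, hamem⟩ := exists_seq_tendsto_sSup (Set.range_nonempty Φ) hΦbdd
  choose d hd using hamem
  -- merging the maximizing sequences into one by `Nat.unpair`
  let c : ℕ → ι := fun k => d k.unpair.1 k.unpair.2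
  have hmax : ∀ c', Φ c' ≤ Φ c := by
    intro c'
    refine (le_csSup hΦbdd ⟨c', rfl⟩).trans (le_of_tendsto' ha fun k => ?_)
    rw [← hd]
    exact integral_mono (hint _) (hint _)
      (hmono _ _ fun n => ⟨Nat.pair k n, by simp [c]⟩)
  refine ⟨c, fun g hg i => ?_⟩
  let c' : ℕ → ι := fun n => Nat.casesOn n i c
  have hcc' : ∀ x, θ c x ≤ θ c' x := hmono _ _ fun n => ⟨n + 1, rfl⟩
  have hae : θ c =ᵐ[μ.toFinite] θ c' :=
    (integral_eq_iff_of_ae_le (hint c) (hint c') (Eventually.of_forall hcc')).1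
      (le_antisymm (integral_mono (hint c) (hint c') hcc') (hmax c'))
  rw [Filter.EventuallyEq, ae_toFinite] at hae
  rw [← AEEqFun.coeFn_le]
  have hg' : ∀ᵐ x ∂μ, ∀ n, u (c n) x ≤ g x :=
    ae_all_iff.2 fun n => AEEqFun.coeFn_le.2 (hg n)
  filter_upwards [hae, hg'] with x h1 h2
  have h3 : Real.arctan (u i x) ≤ θ c' x := hle c' 0 x
  rw [← h1] at h3
  exact Real.arctan_strictMono.le_iff_le.1
    (h3.trans (ciSup_le fun n => Real.arctan_strictMono.monotone (h2 n)))

/-- Dedekind completeness of `L⁰(𝕏)`. -/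
lemma exists_isLUB_L0 (μ : Measure X) [SFinite μ] {S : Set (L0 μ)} (hne : S.Nonempty)
    (hS : BddAbove S) : ∃ b, IsLUB S b := by
  have : Nonempty S := hne.to_subtype
  obtain ⟨c, hc⟩ := exists_seq_upperBounds μ (fun f : S => (f : L0 μ))
  have hm : Measurable fun x => ⨆ n, (c n : L0 μ) x :=
    Measurable.iSup fun n => (c n : L0 μ).measurable
  have hmk := AEEqFun.coeFn_mk (μ := μ) _ hm.aestronglyMeasurable
  obtain ⟨B, hB⟩ := hS
  have hB' : ∀ᵐ x ∂μ, ∀ n, (c n : L0 μ) x ≤ B x :=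
    ae_all_iff.2 fun n => AEEqFun.coeFn_le.2 (hB (c n).2)
  refine ⟨AEEqFun.mk _ hm.aestronglyMeasurable, ?_, ?_⟩
  · intro f hf
    refine hc _ (fun n => ?_) ⟨f, hf⟩
    rw [← AEEqFun.coeFn_le]
    filter_upwards [hmk, hB'] with x h1 h2
    rw [h1]
    refine le_ciSup (f := fun n => (c n : L0 μ) x) ⟨B x, ?_⟩ n
    rintro _ ⟨n, rfl⟩
    exact h2 n
  · intro g hg
    have hg' : ∀ᵐ x ∂μ, ∀ n, (c n : L0 μ) x ≤ g x :=
      ae_all_iff.2 fun n => AEEqFun.coeFn_le.2 (hg (c n).2)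
    rw [← AEEqFun.coeFn_le]
    filter_upwards [hmk, hg'] with x h1 h2
    rw [h1]
    exact ciSup_le h2

/-! ### The distance on `L⁰(𝕏)` -/

lemma integrable_min_abs (μ : Measure X) [SFinite μ] (f g : L0 μ) :
    Integrable (fun x => min |f x - g x| 1) μ.toFinite := by
  refine Integrable.of_bound
    (((f.measurable.sub g.measurable).abs.min measurable_const).aestronglyMeasurable) 1
    (Eventually.of_forall fun x => ?_)
  rw [Real.norm_eq_abs, abs_of_nonneg (le_min (abs_nonneg _) zero_le_one)]
  exact min_le_right _ _

lemma dL0_nonneg (μ : Measure X) [SFinite μ] (f g : L0 μ) : 0 ≤ dL0 μ f g :=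
  integral_nonneg fun _ => le_min (abs_nonneg _) zero_le_one

lemma dL0_mono (μ : Measure X) [SFinite μ] {f g : L0 μ} (hf : 0 ≤ f) (hfg : f ≤ g) :
    dL0 μ f 0 ≤ dL0 μ g 0 := by
  refine integral_mono_ae (integrable_min_abs μ f 0) (integrable_min_abs μ g 0) ?_
  rw [Filter.EventuallyLE, ae_toFinite]
  rw [← AEEqFun.coeFn_le] at hf hfg
  filter_upwards [hf, hfg, AEEqFun.coeFn_zero (α := X) (μ := μ) (β := ℝ)] with x h1 h2 h3
  rw [h3] at h1
  rw [h3]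
  simp only [Pi.zero_apply, sub_zero] at h1 ⊢
  exact min_le_min_right _ (abs_le_abs_of_nonneg h1 h2)

lemma eq_zero_of_dL0 (μ : Measure X) [SFinite μ] {f : L0 μ} (h : dL0 μ f 0 ≤ 0) : f = 0 := by
  have h0 := le_antisymm h (dL0_nonneg μ f 0)
  have h1 := (integral_eq_zero_iff_of_nonneg
    (fun _ => le_min (abs_nonneg _) zero_le_one) (integrable_min_abs μ f 0)).1 h0
  rw [Filter.EventuallyEq, ae_toFinite] at h1
  refine AEEqFun.ext ?_
  filter_upwards [h1] with x hx
  by_contra hne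
  have : 0 < min |f x - (0 : L0 μ) x| 1 := lt_min (abs_pos.2 (sub_ne_zero.2 hne)) one_pos
  exact this.ne' hx

/-- An inequality in `L⁰(𝕏)` valid up to errors `w m → 0` is valid. -/
lemma le_of_le_add_dL0 (μ : Measure X) [SFinite μ] {f g : L0 μ} {w : ℕ → L0 μ} {n : ℕ}
    (hw0 : ∀ m, 0 ≤ w m) (hw : Tendsto (fun m => dL0 μ (w m) 0) atTop (nhds 0))
    (h : ∀ m ≥ n, f ≤ w m + g) : f ≤ g := by
  have h1 : dL0 μ ((f - g) ⊔ 0) 0 ≤ 0 := by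
    refine ge_of_tendsto hw ?_
    filter_upwards [eventually_ge_atTop n] with m hm
    exact dL0_mono μ le_sup_right (sup_le (sub_le_iff_le_add.2 (h m hm)) (hw0 m))
  have h2 := eq_zero_of_dL0 μ h1
  exact sub_nonpos.1 (le_sup_left.trans h2.le)

/-! ### Nets in `L⁰(𝕏)` decreasing to zero -/

/-- A decreasing net with infimum zero contains a decreasing sequence with infimum zero, and
that sequence tends to zero in `L⁰(𝕏)` by dominated convergence. -/
lemma exists_seq_of_antitone (μ : Measure X) [SFinite μ] {I : Type*} {b : Finset I → L0 μ}
    (hb : Antitone b) (hglb : IsGLB (Set.range b) 0) :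
    ∃ H : ℕ → Finset I, Monotone H ∧ (∀ g : L0 μ, (∀ n, g ≤ b (H n)) → g ≤ 0) ∧
      Tendsto (fun n => dL0 μ (b (H n)) 0) atTop (nhds 0) := by
  classical
  obtain ⟨c, hc⟩ := exists_seq_upperBounds μ (fun F => -b F)
  have hinf : ∀ g : L0 μ, (∀ n, g ≤ b (partialSups c n)) → g ≤ 0 := by
    intro g hg
    refine hglb.2 ?_
    rintro _ ⟨F, rfl⟩
    exact neg_le_neg_iff.1
      (hc (-g) (fun n => neg_le_neg ((hg n).trans (hb (le_partialSups c n)))) F)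
  refine ⟨partialSups c, (partialSups c).monotone, hinf, ?_⟩
  set f : ℕ → L0 μ := fun n => b (partialSups c n) with hf
  have hanti : ∀ᵐ x ∂μ, ∀ n, f (n + 1) x ≤ f n x :=
    ae_all_iff.2 fun n =>
      AEEqFun.coeFn_le.2 (hb ((partialSups c).monotone n.le_succ))
  have h0 := AEEqFun.coeFn_zero (α := X) (μ := μ) (β := ℝ)
  have hpos : ∀ᵐ x ∂μ, ∀ n, 0 ≤ f n x := by
    refine ae_all_iff.2 fun n => ?_
    filter_upwards [AEEqFun.coeFn_le.2 (hglb.1 ⟨partialSups c n, rfl⟩), h0] with x h1 h2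
    rw [h2] at h1
    exact h1
  have hm : Measurable fun x => ⨅ n, f n x := Measurable.iInf fun n => (f n).measurable
  have hmk := AEEqFun.coeFn_mk (μ := μ) _ hm.aestronglyMeasurable
  have hbd : ∀ x, (∀ n, 0 ≤ f n x) → BddBelow (Set.range fun n => f n x) := by
    rintro x hx
    refine ⟨0, ?_⟩
    rintro _ ⟨n, rfl⟩
    exact hx n
  have hle : AEEqFun.mk _ hm.aestronglyMeasurable ≤ (0 : L0 μ) := by
    refine hinf _ fun n => ?_
    rw [← AEEqFun.coeFn_le]
    filter_upwards [hmk, hpos] with x h1 h2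
    rw [h1]
    exact ciInf_le (hbd x h2) n
  have hlim : ∀ᵐ x ∂μ, Tendsto (fun n => f n x) atTop (nhds 0) := by
    filter_upwards [hmk, hpos, h0, hanti, AEEqFun.coeFn_le.2 hle] with x h1 h2 h3 h4 h5
    rw [h1, h3] at h5
    have h6 : ⨅ n, f n x = 0 := le_antisymm h5 (le_ciInf h2)
    rw [← h6]
    exact tendsto_atTop_ciInf (antitone_nat_of_succ_le h4) (hbd x h2)
  have key := tendsto_integral_of_dominated_convergence (μ := μ.toFinite)
    (F := fun n x => min |f n x - (0 : L0 μ) x| 1) (f := fun _ => 0) (fun _ => 1)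
    (fun n => (integrable_min_abs μ (f n) 0).aestronglyMeasurable) (integrable_const _)
    (fun n => Eventually.of_forall fun x => by
      rw [Real.norm_eq_abs, abs_of_nonneg (le_min (abs_nonneg _) zero_le_one)]
      exact min_le_right _ _)
    (by
      rw [ae_toFinite]
      filter_upwards [hlim, h0] with x h1 h2
      rw [h2]
      simpa using (h1.abs.min (tendsto_const_nhds (x := (1 : ℝ)))))
  simpa [dL0] using key

/-- If a decreasing net has only nonpositive lower bounds, then so does its double: a lower bound
`g` of `b + b` satisfies `g ≤ b m + b n` for all `m`, `n`. -/
lemma nonpos_of_le_add_self (μ : Measure X) {ι : Type*} [SemilatticeSup ι]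
    {b : ι → L0 μ} (hb : Antitone b) (h : ∀ g : L0 μ, (∀ n, g ≤ b n) → g ≤ 0)
    {g : L0 μ} (hg : ∀ n, g ≤ b n + b n) : g ≤ 0 := by
  refine h g fun n => ?_
  refine sub_nonpos.1 (h (g - b n) fun m => ?_)
  rw [sub_le_iff_le_add]
  exact (hg (m ⊔ n)).trans (add_le_add (hb le_sup_left) (hb le_sup_right))

/-! ### The pointwise norm -/

section Norm

variable (μ : Measure X) [SFinite μ] {M : Type*} [AddCommGroup M] [Module (L0 μ) M]
  [BanachMod μ M]

lemma pn_nonneg (v : M) : 0 ≤ pn μ v := BanachMod.pn_nonneg v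

lemma pn_neg (v : M) : pn μ (-v) = pn μ v := by
  have h := BanachMod.pn_smul (μ := μ) (-1) v
  rw [neg_one_smul] at h
  refine h.trans ?_
  have h1 : |(-1 : L0 μ)| = 1 := by
    rw [abs_neg]
    refine abs_of_nonneg ?_
    rw [← AEEqFun.coeFn_le]
    filter_upwards [AEEqFun.coeFn_zero (α := X) (μ := μ) (β := ℝ),
      AEEqFun.coeFn_one (α := X) (μ := μ) (β := ℝ)] with x h1 h2
    rw [h1, h2]
    exact zero_le_one
  rw [h1, one_mul]
  rfl

lemma pn_add_le (v w : M) : pn μ (v + w) ≤ pn μ v + pn μ w := BanachMod.pn_add_le v w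

lemma pn_sub_le (v w : M) : pn μ (v - w) ≤ pn μ v + pn μ w := by
  rw [sub_eq_add_neg, ← pn_neg μ w]
  exact pn_add_le μ v (-w)

lemma pn_sub_comm (v w : M) : pn μ (v - w) = pn μ (w - v) := by
  rw [← neg_sub, pn_neg]

variable {I : Type*} (v : I → M)

lemma cauchyUB_nonempty (F : Finset I) : (cauchyUB μ v F).Nonempty :=
  ⟨_, ∅, Finset.disjoint_empty_left F, rfl⟩

lemma sumUB_nonempty (s : M) (F : Finset I) : (sumUB μ v s F).Nonempty :=
  ⟨_, ∅, Finset.disjoint_empty_left F, rfl⟩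

variable {v}

lemma antitone_of_cauchyUB {b : Finset I → L0 μ} (hb : ∀ F, IsLUB (cauchyUB μ v F) (b F)) :
    Antitone b := by
  intro F F' h
  refine (hb F').2 ?_
  rintro _ ⟨G, hG, rfl⟩
  exact (hb F).1 ⟨G, hG.mono_right h, rfl⟩

lemma antitone_of_sumUB {s : M} {b : Finset I → L0 μ}
    (hb : ∀ F, IsLUB (sumUB μ v s F) (b F)) : Antitone b := by
  classical
  intro F F' h
  refine (hb F').2 ?_
  rintro _ ⟨G, hG, rfl⟩
  refine (hb F).1 ⟨(F' \ F) ∪ G, ?_, ?_⟩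
  · exact Finset.disjoint_union_left.2 ⟨Finset.sdiff_disjoint, hG.mono_right h⟩
  · rw [Finset.sum_union (hG.symm.mono_left Finset.sdiff_subset), ← add_assoc,
      add_comm (∑ i ∈ F, v i), Finset.sum_sdiff h]

/-! ### The Cauchy criterion -/

/-- The Cauchy condition follows from summability, as a block `∑_{i ∈ G} v_i` is the difference
of two partial sums that both contain `F`. -/
lemma cauchy_of_hasSumMod {s : M} (hs : HasSumMod μ v s) :
    ∃ b : Finset I → L0 μ, (∀ F, IsLUB (cauchyUB μ v F) (b F)) ∧ IsGLB (Set.range b) 0 := by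
  obtain ⟨b, hb, hglb⟩ := hs
  classical
  have hbound : ∀ F, b F + b F ∈ upperBounds (cauchyUB μ v F) := by
    rintro F _ ⟨G, hG, rfl⟩
    have h1 := (hb F).1 ⟨∅, Finset.disjoint_empty_left F, rfl⟩
    have h2 := (hb F).1 ⟨G, hG, rfl⟩
    have h3 : ∑ i ∈ G, v i = (s - (∑ i ∈ F, v i + ∑ i ∈ (∅ : Finset I), v i))
        - (s - (∑ i ∈ F, v i + ∑ i ∈ G, v i)) := by
      rw [Finset.sum_empty]
      abel
    rw [h3]
    exact (pn_sub_le μ _ _).trans (add_le_add h1 h2)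
  choose b' hb' using fun F =>
    exists_isLUB_L0 μ (cauchyUB_nonempty μ v F) ⟨_, hbound F⟩
  refine ⟨b', hb', ?_, ?_⟩
  · rintro _ ⟨F, rfl⟩
    exact (pn_nonneg μ _).trans ((hb' F).1 ⟨∅, Finset.disjoint_empty_left F, rfl⟩)
  · intro g hg
    refine nonpos_of_le_add_self μ (antitone_of_sumUB μ hb) (fun g h => hglb.2 ?_)
      fun F => (hg ⟨F, rfl⟩).trans ((hb' F).2 (hbound F))
    rintro _ ⟨F, rfl⟩
    exact h F

/-- Along a sequence `H n` with `b (H n) → 0` the partial sums are Cauchy, and their limit `s`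
satisfies `|s - ∑_{i ∈ H n} v_i| ≤ b (H n)`, hence is the sum of the family. -/
lemma summableMod_of_cauchy {b : Finset I → L0 μ} (hb : ∀ F, IsLUB (cauchyUB μ v F) (b F))
    (hglb : IsGLB (Set.range b) 0) : SummableMod μ v := by
  classical
  have hanti := antitone_of_cauchyUB μ hb
  obtain ⟨H, hH, hinf, hlim⟩ := exists_seq_of_antitone μ hanti hglb
  set u : ℕ → M := fun n => ∑ i ∈ H n, v i with hu
  have hblock : ∀ n m, n ≤ m → pn μ (u m - u n) ≤ b (H n) := by
    intro n m hnm
    refine (hb (H n)).1 ⟨H m \ H n, Finset.sdiff_disjoint, ?_⟩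
    rw [sub_eq_iff_eq_add.2 (Finset.sum_sdiff (hH hnm)).symm]
  have hd : ∀ n m, n ≤ m → dL0 μ (pn μ (u m - u n)) 0 ≤ dL0 μ (b (H n)) 0 := fun n m h =>
    dL0_mono μ (pn_nonneg μ _) (hblock n m h)
  obtain ⟨s, hs⟩ := BanachMod.complete (μ := μ) u (by
    intro ε hε
    obtain ⟨N, hN⟩ := eventually_atTop.1 (hlim.eventually_lt_const hε)
    refine ⟨N, fun m hm n hn => ?_⟩
    rcases le_total n m with h | h
    · exact (hd n m h).trans_lt (hN n hn)
    · change dL0 μ (pn μ (u m - u n)) 0 < ε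
      rw [pn_sub_comm]
      exact (hd m n h).trans_lt (hN m hm))
  have hsn : ∀ n, pn μ (s - u n) ≤ b (H n) := by
    intro n
    refine le_of_le_add_dL0 μ (w := fun m => pn μ (u m - s)) (n := n)
      (fun m => pn_nonneg μ _) hs fun m hm => ?_
    have h1 : s - u n = (s - u m) + (u m - u n) := by abel
    rw [h1, pn_sub_comm μ (u m) s]
    exact (pn_add_le μ _ _).trans (add_le_add le_rfl (hblock n m hm))
  have hbdd : ∀ F, pn μ s + (b ∅ + b ∅) ∈ upperBounds (sumUB μ v s F) := by
    rintro F _ ⟨G, hG, rfl⟩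
    refine (pn_sub_le μ _ _).trans (add_le_add le_rfl ((pn_add_le μ _ _).trans ?_))
    exact add_le_add ((hb ∅).1 ⟨F, Finset.disjoint_empty_right F, rfl⟩)
      ((hb ∅).1 ⟨G, Finset.disjoint_empty_right G, rfl⟩)
  choose b' hb' using fun F => exists_isLUB_L0 μ (sumUB_nonempty μ v s F) ⟨_, hbdd F⟩
  refine ⟨s, b', hb', ?_, ?_⟩
  · rintro _ ⟨F, rfl⟩
    exact (pn_nonneg μ _).trans ((hb' F).1 ⟨∅, Finset.disjoint_empty_left F, rfl⟩)
  · intro g hg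
    refine nonpos_of_le_add_self μ (hanti.comp_monotone hH) hinf
      fun n => (hg ⟨H n, rfl⟩).trans ((hb' (H n)).2 ?_)
    rintro _ ⟨G, hG, rfl⟩
    rw [← sub_sub]
    exact (pn_sub_le μ _ _).trans (add_le_add (hsn n) ((hb (H n)).1 ⟨G, hG, rfl⟩))

/-- An index outside every `H n`, for a sequence with `⋀ₙ b (H n) = 0`, satisfies
`|v_i| ≤ b (H n)` for all `n`; so the support lies in `⋃ₙ H n`. -/
lemma countable_of_cauchy {b : Finset I → L0 μ} (hb : ∀ F, IsLUB (cauchyUB μ v F) (b F))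
    (hglb : IsGLB (Set.range b) 0) : {i : I | v i ≠ 0}.Countable := by
  obtain ⟨H, -, hinf, -⟩ := exists_seq_of_antitone μ (antitone_of_cauchyUB μ hb) hglb
  refine (Set.countable_iUnion fun n => (H n).countable_toSet).mono fun i hi => ?_
  by_contra hni
  simp only [Set.mem_iUnion, Finset.mem_coe, not_exists] at hni
  refine hi ((BanachMod.pn_eq_zero (μ := μ) (v i)).1 (le_antisymm ?_ (pn_nonneg μ _)))
  refine hinf _ fun n => (hb (H n)).1 ⟨{i}, Finset.disjoint_singleton_left.2 (hni n), ?_⟩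
  rw [Finset.sum_singleton]
  rfl

lemma tendsto_of_hasSumMod {s : M} (hs : HasSumMod μ v s) {F : ℕ → Finset I} (hF : Monotone F)
    (hcov : ∀ i : I, v i ≠ 0 → ∃ n : ℕ, i ∈ F n) :
    Tendsto (fun n => dM μ (∑ i ∈ F n, v i) s) atTop (nhds 0) := by
  classical
  obtain ⟨b, hb, hglb⟩ := hs
  obtain ⟨H, -, -, hlim⟩ := exists_seq_of_antitone μ (antitone_of_sumUB μ hb) hglb
  rw [Metric.tendsto_atTop]
  intro ε hε
  obtain ⟨n, hn⟩ := (hlim.eventually_lt_const hε).exists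
  have hev : ∀ᶠ m in atTop, ∀ i ∈ H n, v i ≠ 0 → i ∈ F m := by
    refine (Filter.eventually_all_finset (H n)).2 fun i _ => ?_
    by_cases hi : v i = 0
    · exact Eventually.of_forall fun m h => absurd hi h
    · obtain ⟨k, hk⟩ := hcov i hi
      filter_upwards [eventually_ge_atTop k] with m hm _
      exact hF hm hk
  obtain ⟨N, hN⟩ := eventually_atTop.1 hev
  refine ⟨N, fun m hm => ?_⟩
  rw [Real.dist_eq, sub_zero, dM, abs_of_nonneg (dL0_nonneg μ _ _)]
  refine (dL0_mono μ (pn_nonneg μ _) ?_).trans_lt hn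
  rw [pn_sub_comm]
  refine (hb (H n)).1 ⟨F m \ H n, Finset.sdiff_disjoint, ?_⟩
  -- the elements of `H n` missing from `F m` contribute zero terms
  have h1 : ∑ i ∈ F m, v i = ∑ i ∈ H n ∪ F m, v i := by
    refine Finset.sum_subset Finset.subset_union_right fun i hi hi' => ?_
    by_contra hne
    exact hi' ((Finset.mem_union.1 hi).elim (fun h => hN m hm i h hne) id)
  rw [h1, ← Finset.union_sdiff_self_eq_union, Finset.sum_union Finset.disjoint_sdiff]

end Norm

/-- Cauchy summability criterion. A family `{v_i}_{i ∈ I}` in a Banach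
`L⁰(𝕏)`-module is summable if and only if `⋀_F ⋁_G |∑_{i∈G} v_i| = 0` (the suprema over
finite `G ⊆ I ∖ F` being the values `b F`, and the infimum over finite `F` being `0`).
In this case `J := {i | v_i ≠ 0}` is at most countable and, for every increasing sequence
`(F_n)` of finite subsets of `J` with `⋃_n F_n = J`, the partial sums `∑_{i ∈ F_n} v_i`
converge to `∑_{i ∈ I} v_i` in `ℳ`. -/
theorem cauchy_summability_criterion
    (μ : Measure X) [SigmaFinite μ]
    (M : Type*) [AddCommGroup M] [Module (L0 μ) M] [BanachMod μ M]
    {I : Type*} (v : I → M) :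
    (SummableMod μ v ↔
      ∃ b : Finset I → L0 μ, (∀ F, IsLUB (cauchyUB μ v F) (b F)) ∧ IsGLB (Set.range b) 0)
    ∧ (SummableMod μ v → {i : I | v i ≠ 0}.Countable)
    ∧ (∀ s : M, HasSumMod μ v s → ∀ F : ℕ → Finset I, Monotone F →
        (∀ n : ℕ, ∀ i ∈ F n, v i ≠ 0) → (∀ i : I, v i ≠ 0 → ∃ n : ℕ, i ∈ F n) →
        Tendsto (fun n => dM μ (∑ i ∈ F n, v i) s) atTop (nhds 0)) := by
  refine ⟨⟨fun ⟨s, hs⟩ => cauchy_of_hasSumMod μ hs,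
    fun ⟨b, hb, hglb⟩ => summableMod_of_cauchy μ hb hglb⟩, ?_, ?_⟩
  · rintro ⟨s, hs⟩
    obtain ⟨b, hb, hglb⟩ := cauchy_of_hasSumMod μ hs
    exact countable_of_cauchy μ hb hglb
  · intro s hs F hF _ hcov
    exact tendsto_of_hasSumMod μ hs hF hcov

end Paper
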